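/- Suppose components i ≠ j of W are p-transversal at a point. If α,β ∈ A¹ satisfy α∧β = 0 in A²_{W,k}, then α_i·β_j − α_j·β_i = 0 in k. -/

import Mathlib

/-!
Contraction with the sum of coordinates is a map `Λ²A_P → A_P` sending `ψ^δ ∧ ψ^δ'` to
`ψ^δ' - ψ^δ`. It kills every cyclic sum, and these span `I_P` as soon as `P` lies on two
components; so if the `P`-component of `α ∧ β` vanishes, then at each branch `δ₀` the coefficients
`c δ δ'` of `ψ^δ ∧ ψ^δ'` satisfy `Σ_δ c δ δ₀ = Σ_δ c δ₀ δ`. Grouping the branches by component,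
this is the resonance condition at `δ₀`, which holds trivially when `P` lies on a single component,
all multiplicities there being zero by convention. If `δ₀` lies on `i` and the only other component
through `P` is `j`, that condition reads `μ_P(δ₀, j) (α_i β_j - α_j β_i) = 0`, and transversality
provides a branch, on `i` or (with `i` and `j` exchanged) on `j`, where the first factor is nonzero.
-/

open scoped Classical

/-- The weak combinatorial type of a plane projective curve. -/
structure WeakComb (p : ℕ) where
  /-- the set of irreducible components -/
  C : Type
  [fintypeC : Fintype C]
  [decEqC : DecidableEq C]
  [nonemptyC : Nonempty C]
  /-- the set of singular points -/
  S : Type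
  [fintypeS : Fintype S]
  [decEqS : DecidableEq S]
  /-- the local branches at each singular point -/
  Δ : S → Type
  [fintypeΔ : ∀ P, Fintype (Δ P)]
  [decEqΔ : ∀ P, DecidableEq (Δ P)]
  /-- each branch belongs to a component -/
  φ : ∀ P, Δ P → C
  /-- local intersection multiplicities of pairs of branches -/
  μ : ∀ P, Δ P → Δ P → ℕ
  μ_symm : ∀ P δ δ', φ P δ ≠ φ P δ' → μ P δ δ' = μ P δ' δ
  μ_pos : ∀ P δ δ', φ P δ ≠ φ P δ' → 0 < μ P δ δ'

attribute [instance] WeakComb.fintypeC WeakComb.decEqC WeakComb.nonemptyC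
attribute [instance] WeakComb.fintypeS WeakComb.decEqS WeakComb.fintypeΔ WeakComb.decEqΔ

namespace WeakComb

variable {p : ℕ} (W : WeakComb p)

/-- μ_P(δ,δ') with the convention that it vanishes on pairs of branches of the same component. -/
def muk (P : W.S) (δ δ' : W.Δ P) : ℕ :=
  if W.φ P δ = W.φ P δ' then 0 else W.μ P δ δ'

/-- μ_P(δ, j): the multiplicity of intersection of the branch δ with the component j. -/
def muC (P : W.S) (δ : W.Δ P) (j : W.C) : ℕ :=
  ∑ δ' : W.Δ P, if W.φ P δ' = j then W.muk P δ δ' else 0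

/-- A degree assignment: positive degrees satisfying the Bezout condition. -/
def IsDegree (d : W.C → ℕ) : Prop :=
  (∀ i, 0 < d i) ∧
  ∀ i j, i ≠ j →
    d i * d j = ∑ P : W.S, ∑ δ : W.Δ P, if W.φ P δ = i then W.muC P δ j else 0

/-- The basis vector σ_i of A¹ = (C → ZMod p). -/
noncomputable def sigma (i : W.C) : W.C → ZMod p := Pi.single i 1

/-- The basis vector ψ_P^δ of A_P = (Δ_P → ZMod p). -/
noncomputable def psi (P : W.S) (δ : W.Δ P) : W.Δ P → ZMod p := Pi.single δ 1

/-- ψ_P^δ ∧ ψ_P^δ' as an element of Λ² A_P. -/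
noncomputable def psiW (P : W.S) (δ δ' : W.Δ P) : ⋀[ZMod p]^2 (W.Δ P → ZMod p) :=
  ⟨ExteriorAlgebra.ιMulti (ZMod p) 2 ![W.psi P δ, W.psi P δ'],
   ExteriorAlgebra.ιMulti_range (ZMod p) 2 (Set.mem_range_self _)⟩

/-- The subspace I_P of Λ² A_P. -/
noncomputable def IP (P : W.S) : Submodule (ZMod p) (⋀[ZMod p]^2 (W.Δ P → ZMod p)) :=
  Submodule.span (ZMod p)
    ({x | ∃ δ1 δ2 δ3 : W.Δ P, x = W.psiW P δ1 δ2 + W.psiW P δ2 δ3 + W.psiW P δ3 δ1} ∪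
     {x | (∀ δ δ' : W.Δ P, W.φ P δ = W.φ P δ') ∧ ∃ δ1 δ2 : W.Δ P, x = W.psiW P δ1 δ2})

/-- The degree-two part A² = A^{2,0} ⊕ A^{2,∞} of the Combinatorial Aomoto algebra. -/
abbrev A2 (d : W.C → ℕ) : Type :=
  ((P : W.S) → (⋀[ZMod p]^2 (W.Δ P → ZMod p)) ⧸ W.IP P) ×
  ({i : W.C // p ∣ d i} → ZMod p)

/-- The wedge product A¹ × A¹ → A², extending σ_i ∧ σ_j bilinearly. -/
noncomputable def wedge (d : W.C → ℕ) (α β : W.C → ZMod p) : W.A2 d :=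
  (fun P => ∑ δ : W.Δ P, ∑ δ' : W.Δ P,
      (α (W.φ P δ) * β (W.φ P δ') * (W.muk P δ δ' : ZMod p)) •
        Submodule.Quotient.mk (W.psiW P δ δ'),
   fun i => α i.1 * (∑ j : W.C, (d j : ZMod p) * β j)
          - β i.1 * (∑ j : W.C, (d j : ZMod p) * α j))

/-- The linear map ·∧α : A¹ → A², β ↦ β ∧ α. -/
noncomputable def wedgeL (d : W.C → ℕ) (α : W.C → ZMod p) :
    (W.C → ZMod p) →ₗ[ZMod p] W.A2 d where
  toFun β := W.wedge d β α
  map_add' β γ := by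
    refine Prod.ext ?_ ?_
    · funext P
      simp only [wedge, Pi.add_apply, Prod.fst_add]
      rw [← Finset.sum_add_distrib]
      refine Finset.sum_congr rfl fun δ _ => ?_
      rw [← Finset.sum_add_distrib]
      refine Finset.sum_congr rfl fun δ' _ => ?_
      rw [← add_smul, add_mul, add_mul]
    · funext i
      simp only [wedge, Pi.add_apply, Prod.snd_add]
      rw [show (∑ x : W.C, (d x : ZMod p) * (β x + γ x))
            = (∑ x : W.C, (d x : ZMod p) * β x) + ∑ x : W.C, (d x : ZMod p) * γ x by
        rw [← Finset.sum_add_distrib]; exact Finset.sum_congr rfl fun x _ => by ring]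
      ring
  map_smul' c β := by
    refine Prod.ext ?_ ?_
    · funext P
      simp only [wedge, Pi.smul_apply, smul_eq_mul, RingHom.id_apply, Prod.smul_fst]
      rw [Finset.smul_sum]
      refine Finset.sum_congr rfl fun δ _ => ?_
      rw [Finset.smul_sum]
      refine Finset.sum_congr rfl fun δ' _ => ?_
      rw [smul_smul]
      ring_nf
    · funext i
      simp only [wedge, Pi.smul_apply, smul_eq_mul, RingHom.id_apply, Prod.smul_snd]
      rw [show (∑ x : W.C, (d x : ZMod p) * (c * β x)) = c * ∑ x : W.C, (d x : ZMod p) * β x by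
        rw [Finset.mul_sum]; exact Finset.sum_congr rfl fun x _ => by ring]
      ring

/-- The kernel of ·∧α : A¹ → A². -/
noncomputable def wedgeKer (d : W.C → ℕ) (α : W.C → ZMod p) :
    Submodule (ZMod p) (W.C → ZMod p) :=
  LinearMap.ker (W.wedgeL d α)

/-- H¹ of the Combinatorial Aomoto complex with differential ·∧α. -/
noncomputable abbrev H1 (d : W.C → ℕ) (α : W.C → ZMod p) :=
  (W.wedgeKer d α) ⧸
    (Submodule.comap (W.wedgeKer d α).subtype (Submodule.span (ZMod p) {α}))

end WeakComb

namespace WeakComb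

variable {p : ℕ} (W : WeakComb p)

/-- The resonance condition for (α,β) at the branch δ of the point P. -/
def ResCond (α β : W.C → ZMod p) (P : W.S) (δ : W.Δ P) : Prop :=
  β (W.φ P δ) * (∑ j : W.C, (W.muC P δ j : ZMod p) * α j)
    - α (W.φ P δ) * (∑ j : W.C, (W.muC P δ j : ZMod p) * β j) = 0

/-- P is a p-transversal point for the pair of components i ≠ j. -/
def PTransPoint (P : W.S) (i j : W.C) : Prop :=
  i ≠ j ∧ (∀ δ : W.Δ P, W.φ P δ = i ∨ W.φ P δ = j) ∧
  (∃ δ : W.Δ P, W.φ P δ = i) ∧ (∃ δ : W.Δ P, W.φ P δ = j) ∧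
  ((∃ δ : W.Δ P, W.φ P δ = i ∧ ((W.muC P δ j : ZMod p) ≠ 0)) ∨
   (∃ δ : W.Δ P, W.φ P δ = j ∧ ((W.muC P δ i : ZMod p) ≠ 0)))

/-- The components i and j are p-transversal at a point. -/
def PTransComponents (i j : W.C) : Prop := ∃ P : W.S, W.PTransPoint P i j

/-- α is non-coordinate if all its coordinates are nonzero. -/
def NonCoordinate (α : W.C → ZMod p) : Prop := ∀ i, α i ≠ 0

end WeakComb

/-- The setoid (partition) obtained from s by merging the classes of c₀ and c₁. -/
def mergeSetoid {α : Type*} (s : Setoid α) (c₀ c₁ : α) : Setoid α :=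
  Relation.EqvGen.setoid (fun a b => s.r a b ∨ (a = c₀ ∧ b = c₁))

namespace WeakComb

variable {p : ℕ} (W : WeakComb p)

/-- W is p-transversal at P with respect to (α, π), where the surjection π is encoded by the
setoid s of its fibres; the two classes π(φ_P(Δ_P)) = {i',j'} are those of c₀ and c₁. -/
def PTransversalAt (α : W.C → ZMod p) (s : Setoid W.C) (P : W.S) (c₀ c₁ : W.C) : Prop :=
  ¬ s.r c₀ c₁ ∧
  (∀ δ : W.Δ P, s.r (W.φ P δ) c₀ ∨ s.r (W.φ P δ) c₁) ∧
  (∃ δ : W.Δ P, s.r (W.φ P δ) c₀) ∧ (∃ δ : W.Δ P, s.r (W.φ P δ) c₁) ∧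
  ∃ δ : W.Δ P, s.r (W.φ P δ) c₀ ∧
    (∑ δ' : W.Δ P, if s.r (W.φ P δ') c₁
        then (W.muk P δ δ' : ZMod p) * α (W.φ P δ') else 0) ≠ 0

/-- A p-reduction step with respect to α. -/
def RedStep (α : W.C → ZMod p) (s s' : Setoid W.C) : Prop :=
  ∃ (P : W.S) (c₀ c₁ : W.C), W.PTransversalAt α s P c₀ c₁ ∧ s' = mergeSetoid s c₀ c₁

/-- W is completely p-reductive with respect to α: starting from the identity partition (⊥),
some finite sequence of p-reduction steps reaches the one-class partition (⊤). -/
def CompletelyPReductive (α : W.C → ZMod p) : Prop :=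
  Relation.ReflTransGen (W.RedStep α) ⊥ ⊤

/-- β is π-proportional to α, for the surjection π encoded by the setoid s: on each class
of s, β is a scalar multiple of α. -/
def Proportional (s : Setoid W.C) (α β : W.C → ZMod p) : Prop :=
  ∀ c : W.C, ∃ l : ZMod p, ∀ c', s.r c c' → β c' = l * α c'

end WeakComb

/-- A combinatorial quasi-fiber structure of rank r on W. -/
structure QuasiFiber {p : ℕ} (W : WeakComb p) (r : ℕ) where
  /-- which quasi-fiber each component belongs to -/
  g : W.C → Fin r
  g_surj : Function.Surjective g
  /-- multiplicities of components inside the quasi-fibers -/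
  m : W.C → ℕ
  m_pos : ∀ c, 0 < m c
  /-- the set of base points -/
  B : Set W.S
  fiber_off_base : ∀ P : W.S, P ∉ B → ∀ δ δ' : W.Δ P, g (W.φ P δ) = g (W.φ P δ')

namespace WeakComb

variable {p : ℕ} (W : WeakComb p) {r : ℕ}

/-- M_s(δ) for a branch δ at a base point P. -/
noncomputable def Mcoef (F : QuasiFiber W r) (P : W.S) (δ : W.Δ P) (s : Fin r) : ZMod p :=
  ∑ δ' : W.Δ P,
    if W.φ P δ' ≠ W.φ P δ ∧ F.g (W.φ P δ') = s
      then ((F.m (W.φ P δ') * W.μ P δ δ' : ℕ) : ZMod p) else 0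

/-- ω_a = Σ_c m_c · a_{g(c)} · σ_c ∈ A¹. -/
noncomputable def omega (F : QuasiFiber W r) (a : Fin r → ZMod p) : W.C → ZMod p :=
  fun c => (F.m c : ZMod p) * a (F.g c)

/-- The restricted combinatorics W°_s of the quasi-fiber s. -/
noncomputable def restrict (F : QuasiFiber W r) (s : Fin r) : WeakComb p where
  C := {c : W.C // F.g c = s}
  fintypeC := Fintype.ofFinite _
  decEqC := inferInstance
  nonemptyC := by obtain ⟨c, hc⟩ := F.g_surj s; exact ⟨⟨c, hc⟩⟩
  S := {P : W.S // Nonempty (W.Δ P) ∧ ∀ δ : W.Δ P, F.g (W.φ P δ) = s}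
  fintypeS := Fintype.ofFinite _
  decEqS := inferInstance
  Δ := fun P => W.Δ P.1
  fintypeΔ := fun P => inferInstance
  decEqΔ := fun P => inferInstance
  φ := fun P δ => ⟨W.φ P.1 δ, P.2.2 δ⟩
  μ := fun P δ δ' => W.μ P.1 δ δ'
  μ_symm := fun P δ δ' h => W.μ_symm P.1 δ δ' (fun e => h (Subtype.ext e))
  μ_pos := fun P δ δ' h => W.μ_pos P.1 δ δ' (fun e => h (Subtype.ext e))

/-- The restriction ω_a|_s of ω_a to the restricted combinatorics W°_s. -/
noncomputable def omegaRes (F : QuasiFiber W r) (a : Fin r → ZMod p) (s : Fin r) :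
    (W.restrict F s).C → ZMod p :=
  fun c => (F.m c.1 : ZMod p) * a s

end WeakComb

section Statements

open WeakComb

variable {p : ℕ} [Fact p.Prime]

section ExteriorSquare

variable {R M : Type*} [CommRing R] [AddCommGroup M] [Module R M]

/-- The contraction `x ∧ y ↦ f x • y - f y • x` of the exterior square by a linear form `f`,
i.e. the degree-two part of the interior product; `ExteriorAlgebra.ιInv` reads the result, which
has degree one, as a vector. -/
noncomputable def exteriorSquareContraction (f : Module.Dual R M) : ⋀[R]^2 M →ₗ[R] M :=
  ExteriorAlgebra.ιInv ∘ₗ CliffordAlgebra.contractLeft f ∘ₗ (⋀[R]^2 M).subtype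

theorem exteriorSquareContraction_ιMulti (f : Module.Dual R M) (x y : M) :
    exteriorSquareContraction f (exteriorPower.ιMulti R 2 ![x, y]) = f x • y - f y • x := by
  have hxy : (exteriorPower.ιMulti R 2 ![x, y] : ExteriorAlgebra R M) =
      ExteriorAlgebra.ι R x * ExteriorAlgebra.ι R y := by
    simp [ExteriorAlgebra.ιMulti_apply]
  have hcontract : CliffordAlgebra.contractLeft f
      (ExteriorAlgebra.ι R x * ExteriorAlgebra.ι R y) =
        ExteriorAlgebra.ι R (f x • y - f y • x) := by
    rw [ExteriorAlgebra.ι, CliffordAlgebra.contractLeft_ι_mul, CliffordAlgebra.contractLeft_ι,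
      ← Algebra.commutes, ← Algebra.smul_def, map_sub, map_smul, map_smul]
  rw [exteriorSquareContraction, LinearMap.comp_apply, LinearMap.comp_apply,
    Submodule.subtype_apply, hxy, hcontract]
  exact ExteriorAlgebra.ι_leftInverse _

theorem exteriorSquareContraction_cyclic_sum {f : Module.Dual R M} {x y z : M}
    (hxy : f x = f y) (hyz : f y = f z) :
    exteriorSquareContraction f (exteriorPower.ιMulti R 2 ![x, y] +
      exteriorPower.ιMulti R 2 ![y, z] + exteriorPower.ιMulti R 2 ![z, x]) = 0 := by
  simp only [map_add, exteriorSquareContraction_ιMulti, hxy, hyz]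
  abel

end ExteriorSquare

namespace WeakComb

variable {n : ℕ} (W : WeakComb n)

theorem muk_comm (P : W.S) (δ δ' : W.Δ P) : W.muk P δ δ' = W.muk P δ' δ := by
  by_cases hφ : W.φ P δ = W.φ P δ'
  · rw [muk, muk, if_pos hφ, if_pos hφ.symm]
  · rw [muk, muk, if_neg hφ, if_neg (Ne.symm hφ), W.μ_symm P δ δ' hφ]

theorem muC_eq_zero_of_forall_eq {P : W.S} {δ : W.Δ P} {j : W.C}
    (h : ∀ δ', W.φ P δ' = j → W.φ P δ = W.φ P δ') : W.muC P δ j = 0 := by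
  refine Finset.sum_eq_zero fun δ' _ ↦ ?_
  split_ifs with hδ'
  · exact if_pos (h δ' hδ')
  · rfl

theorem sum_muC_mul (P : W.S) (δ : W.Δ P) (γ : W.C → ZMod n) :
    ∑ j, (W.muC P δ j : ZMod n) * γ j = ∑ δ', (W.muk P δ δ' : ZMod n) * γ (W.φ P δ') := by
  simp only [muC, Nat.cast_sum, Finset.sum_mul, Nat.cast_ite, Nat.cast_zero, ite_mul, zero_mul]
  rw [Finset.sum_comm]
  simp only [Finset.sum_ite_eq, Finset.mem_univ, if_true]

/-- The boundary map `Λ²A_P → A_P`, `ψ^δ ∧ ψ^δ' ↦ ψ^δ' - ψ^δ`, given by contraction with the sum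
of the coordinates; it descends to `Λ²A_P / I_P` when `P` lies on at least
two components. -/
noncomputable def boundary (P : W.S) :
    ⋀[ZMod n]^2 (W.Δ P → ZMod n) →ₗ[ZMod n] (W.Δ P → ZMod n) :=
  exteriorSquareContraction (∑ δ, LinearMap.proj δ)

theorem sum_proj_psi (P : W.S) (δ : W.Δ P) :
    (∑ ε, LinearMap.proj ε : Module.Dual (ZMod n) (W.Δ P → ZMod n)) (W.psi P δ) = 1 := by
  simp [psi, LinearMap.sum_apply]

theorem boundary_psiW (P : W.S) (δ δ' : W.Δ P) :
    W.boundary P (W.psiW P δ δ') = W.psi P δ' - W.psi P δ := by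
  refine (exteriorSquareContraction_ιMulti _ _ _).trans ?_
  rw [sum_proj_psi, sum_proj_psi, one_smul, one_smul]

theorem boundary_sum_smul_psiW_apply (P : W.S) (c : W.Δ P → W.Δ P → ZMod n) (δ₀ : W.Δ P) :
    W.boundary P (∑ δ, ∑ δ', c δ δ' • W.psiW P δ δ') δ₀ = ∑ δ, c δ δ₀ - ∑ δ, c δ₀ δ := by
  have hpsi (δ : W.Δ P) : W.psi P δ δ₀ = if δ₀ = δ then 1 else 0 := Pi.single_apply δ 1 δ₀
  simp only [map_sum, map_smul, boundary_psiW, Finset.sum_apply, Pi.smul_apply, Pi.sub_apply,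
    hpsi, smul_eq_mul, mul_sub, mul_ite, mul_one, mul_zero, Finset.sum_sub_distrib,
    Finset.sum_ite_eq, Finset.mem_univ, if_true]
  congr 1
  rw [Finset.sum_comm]
  simp only [Finset.sum_ite_eq, Finset.mem_univ, if_true]

theorem IP_le_ker_boundary {P : W.S} {δ₁ δ₂ : W.Δ P} (hne : W.φ P δ₁ ≠ W.φ P δ₂) :
    W.IP P ≤ LinearMap.ker (W.boundary P) := by
  refine Submodule.span_le.2 ?_
  rintro _ (⟨a, b, c, rfl⟩ | ⟨hφ, -⟩)
  · refine exteriorSquareContraction_cyclic_sum ?_ ?_ <;> rw [sum_proj_psi, sum_proj_psi]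
  · exact absurd (hφ δ₁ δ₂) hne

theorem wedge_fst_apply (d : W.C → ℕ) (α β : W.C → ZMod n) (P : W.S) :
    (W.wedge d α β).1 P = (W.IP P).mkQ (∑ δ, ∑ δ',
      (α (W.φ P δ) * β (W.φ P δ') * (W.muk P δ δ' : ZMod n)) • W.psiW P δ δ') := by
  simp only [map_sum, map_smul]
  rfl

theorem resCond_of_wedge_fst_apply_eq_zero {d : W.C → ℕ} {α β : W.C → ZMod n} {P : W.S}
    (hw : (W.wedge d α β).1 P = 0) (δ₀ : W.Δ P) : W.ResCond α β P δ₀ := by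
  by_cases hφ : ∀ δ δ' : W.Δ P, W.φ P δ = W.φ P δ'
  · have hmuC (j : W.C) : W.muC P δ₀ j = 0 := W.muC_eq_zero_of_forall_eq fun δ _ ↦ hφ δ₀ δ
    simp only [ResCond, hmuC, Nat.cast_zero, zero_mul, Finset.sum_const_zero, mul_zero, sub_zero]
  · push Not at hφ
    obtain ⟨δ₁, δ₂, hne⟩ := hφ
    rw [wedge_fst_apply, Submodule.mkQ_apply, Submodule.Quotient.mk_eq_zero] at hw
    have hboundary := congrFun (LinearMap.mem_ker.1 (W.IP_le_ker_boundary hne hw)) δ₀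
    rw [boundary_sum_smul_psiW_apply, Pi.zero_apply] at hboundary
    rw [ResCond, sum_muC_mul, sum_muC_mul, Finset.mul_sum, Finset.mul_sum, ← hboundary]
    congr 1 <;> refine Finset.sum_congr rfl fun δ _ ↦ ?_
    · rw [W.muk_comm P δ₀ δ]
      ring
    · ring

variable {W} in
theorem ResCond.muC_mul_minor_eq_zero {α β : W.C → ZMod n} {P : W.S} {δ : W.Δ P}
    (hres : W.ResCond α β P δ) {j : W.C} (hφ : ∀ δ', W.φ P δ' = W.φ P δ ∨ W.φ P δ' = j) :
    (W.muC P δ j : ZMod n) * (α (W.φ P δ) * β j - α j * β (W.φ P δ)) = 0 := by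
  have hsum (γ : W.C → ZMod n) :
      ∑ l, (W.muC P δ l : ZMod n) * γ l = (W.muC P δ j : ZMod n) * γ j := by
    refine Finset.sum_eq_single_of_mem j (Finset.mem_univ j) fun l _ hl ↦ ?_
    have hmuC : W.muC P δ l = 0 := W.muC_eq_zero_of_forall_eq fun δ' hδ' ↦
      ((hφ δ').resolve_right (hδ'.trans_ne hl)).symm
    rw [hmuC, Nat.cast_zero, zero_mul]
  rw [ResCond, hsum, hsum] at hres
  linear_combination -hres

end WeakComb

theorem stmt3_general {n : ℕ} [NoZeroDivisors (ZMod n)] (W : WeakComb n) (d : W.C → ℕ)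
    {P : W.S} {i j : W.C} (hP : W.PTransPoint P i j)
    {α β : W.C → ZMod n} (hw : (W.wedge d α β).1 P = 0) :
    α i * β j - α j * β i = 0 := by
  have hres := W.resCond_of_wedge_fst_apply_eq_zero hw
  obtain ⟨-, hφ, -, -, ⟨δ, rfl, hμ⟩ | ⟨δ, rfl, hμ⟩⟩ := hP
  · exact (mul_eq_zero.1 ((hres δ).muC_mul_minor_eq_zero hφ)).resolve_left hμ
  · have hminor := (mul_eq_zero.1
      ((hres δ).muC_mul_minor_eq_zero fun δ' ↦ (hφ δ').symm)).resolve_left hμ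
    linear_combination -hminor

/-- Lemma `ptransversal`. -/
theorem stmt3 (W : WeakComb p) (d : W.C → ℕ) (hd : W.IsDegree d)
    (i j : W.C) (h : W.PTransComponents i j)
    (α β : W.C → ZMod p) (hw : W.wedge d α β = 0) :
    α i * β j - α j * β i = 0 := by
  obtain ⟨P, hP⟩ := h
  exact stmt3_general W d hP (congrFun (congrArg Prod.fst hw) P)

end Statements
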